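/- arXiv:2102.02453 — 4 statements merged into one kernel-verified Lean document; each statement's English description precedes it below -/
import Mathlib

section
/- Let k be a field of characteristic p > 0, let V be a k-vector space, and let α, β, γ be pairwise commuting k-linear endomorphisms of V such that α^p = 0, β^p = 0, and γ^{p^r} = 0 for some r ≥ 1. Then V, regarded as a k[u]/(u^p)-module with u acting as α, is projective if and only if V, regarded as a k[v]/(v^p)-module with v acting as α + β∘γ, is projective. -/
open Polynomial TensorProduct

/-- The truncated polynomial algebra `k[t]/(t^p)`. -/
abbrev TruncPoly (k : Type*) [Field k] (p : ℕ) :=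
  Polynomial k ⧸ Ideal.span {(Polynomial.X : Polynomial k) ^ p}

/-- The unique `k`-algebra homomorphism `k[t]/(t^p) → C` sending `t` to a given
element `c` with `c ^ p = 0`. -/
noncomputable def truncHom {k : Type*} [Field k] {p : ℕ} {C : Type*} [Ring C] [Algebra k C]
    (c : C) (hc : c ^ p = 0) : TruncPoly k p →ₐ[k] C :=
  Ideal.Quotient.liftₐ _ (Polynomial.aeval c) (by
    intro a ha
    rw [Ideal.mem_span_singleton] at ha
    obtain ⟨b, rfl⟩ := ha
    simp [map_mul, map_pow, hc])

/-- `V` regarded as a module over `k[t]/(t^p)` with `t` acting as the `p`-nilpotent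
`k`-linear endomorphism `θ`. -/
noncomputable def truncModEnd {k : Type*} [Field k] {p : ℕ} {V : Type*} [AddCommGroup V]
    [Module k V] (θ : Module.End k V) (hθ : θ ^ p = 0) : Module (TruncPoly k p) V :=
  Module.compHom V (truncHom θ hθ).toRingHom

/-- In an algebra over a field of prime characteristic `p`, the sum of two commuting
`p`-nilpotent elements is again `p`-nilpotent. -/
lemma add_pow_eq_zero_of_commute {k : Type*} [Field k] {p : ℕ} [Fact p.Prime] [CharP k p]
    {R : Type*} [Ring R] [Algebra k R] {x y : R} (h : Commute x y)
    (hx : x ^ p = 0) (hy : y ^ p = 0) : (x + y) ^ p = 0 := by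
  have hpR : (p : R) = 0 := by
    rw [← map_natCast (algebraMap k R), CharP.cast_eq_zero, map_zero]
  rw [h.add_pow]
  refine Finset.sum_eq_zero ?_
  intro i hi
  rw [Finset.mem_range, Nat.lt_succ_iff] at hi
  rcases Nat.lt_or_ge i p with hlt | hge
  · rcases Nat.eq_zero_or_pos i with rfl | hpos
    · simp [hy]
    · obtain ⟨m, hm⟩ := (Fact.out : p.Prime).dvd_choose_self hpos.ne' hlt
      rw [hm]
      push_cast
      rw [hpR, zero_mul, mul_zero]
  · have : i = p := le_antisymm hi hge
    subst this
    simp [hx]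

/-- The trace-type sum used in the Higman-style criterion. -/
def higSum {S : Type*} [Ring S] (m : ℕ) (x φ : S) : S :=
  ∑ i ∈ Finset.range (m + 1), x ^ i * φ * x ^ (m - i)

lemma higSum_eq_right {S : Type*} [Ring S] (m : ℕ) (x φ f : S) (h : x * f = 0) :
    higSum m x φ * f = x ^ m * φ * f := by
  rw [higSum, Finset.sum_range_succ, add_mul, Finset.sum_mul, Finset.sum_eq_zero]
  · simp
  · intro i hi
    rw [Finset.mem_range] at hi
    obtain ⟨j, hj⟩ : ∃ j, m - i = j + 1 := ⟨m - i - 1, by omega⟩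
    rw [hj, pow_succ, mul_assoc, mul_assoc (x ^ j), h]
    simp

lemma higSum_eq_left {S : Type*} [Ring S] (m : ℕ) (x φ f : S) (h : x ^ m * f = 0) :
    ∃ g, higSum m x φ * f = x * g := by
  refine ⟨∑ i ∈ Finset.range m, x ^ i * φ * x ^ (m - (i + 1)) * f, ?_⟩
  rw [higSum, Finset.sum_range_succ', add_mul, Finset.sum_mul, Finset.mul_sum]
  simp only [pow_zero, one_mul, Nat.sub_zero]
  rw [mul_assoc φ, h, mul_zero, add_zero]
  refine Finset.sum_congr rfl fun i _ => ?_
  rw [pow_succ']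
  simp only [mul_assoc]

lemma higSum_commute {S : Type*} [Ring S] (m : ℕ) (x φ : S) (h : x ^ (m + 1) = 0) :
    x * higSum m x φ = higSum m x φ * x := by
  have h1 : x * higSum m x φ = ∑ i ∈ Finset.range m, x ^ (i + 1) * φ * x ^ (m - i) := by
    rw [higSum, Finset.sum_range_succ, mul_add, Finset.mul_sum, ← mul_assoc, ← mul_assoc,
      ← pow_succ', h]
    simp only [zero_mul, add_zero]
    refine Finset.sum_congr rfl fun i _ => ?_
    rw [pow_succ']
    simp only [mul_assoc]
  rw [h1, higSum, Finset.sum_range_succ', add_mul, Finset.sum_mul]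
  simp only [pow_zero, one_mul, Nat.sub_zero]
  rw [mul_assoc φ, ← pow_succ, h, mul_zero, add_zero]
  refine Finset.sum_congr rfl fun i hi => ?_
  rw [Finset.mem_range] at hi
  rw [mul_assoc _ _ x, ← pow_succ]
  congr 2
  omega

/-- exactness implies a Higman splitting -/
lemma hig_of_exact {k V : Type*} [Field k] [AddCommGroup V] [Module k V] (m : ℕ)
    (θ z : Module.End k V) (hθ : θ ^ (m + 1) = 0)
    (hz : ∀ v, θ v = 0 → (θ ^ m) (z v) = v) :
    ∃ φ, higSum m θ φ = 1 := by
  set E := higSum m θ z with hE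
  have hc : Commute θ E := higSum_commute m θ z hθ
  have hE1 : ∀ v, θ v = 0 → E v = v := by
    intro v hv
    have hsum : E v = ∑ i ∈ Finset.range (m + 1), (θ ^ i) (z ((θ ^ (m - i)) v)) := by
      simp [hE, higSum, LinearMap.sum_apply]
    rw [hsum, Finset.sum_range_succ, Finset.sum_eq_zero]
    · simpa using hz v hv
    · intro i hi
      rw [Finset.mem_range] at hi
      obtain ⟨j, hj⟩ : ∃ j, m - i = j + 1 := ⟨m - i - 1, by omega⟩
      rw [hj, pow_succ, Module.End.mul_apply, hv]
      simp
  have hc' : Commute θ (E - 1) := hc.sub_right (Commute.one_right _)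
  have hn : ∀ j v, (θ ^ j) v = 0 → ((E - 1) ^ j) v = 0 := by
    intro j
    induction j with
    | zero => intro v hv; simpa using hv
    | succ j ih =>
      intro v hv
      rw [pow_succ, Module.End.mul_apply]
      apply ih
      rw [← Module.End.mul_apply, (hc'.pow_left j).eq, Module.End.mul_apply]
      have := hE1 ((θ ^ j) v) (by rw [← Module.End.mul_apply, ← pow_succ', hv])
      simp [this]
  have hnil : IsNilpotent (E - 1) := ⟨m + 1, by
    ext v
    exact hn _ v (by simp [hθ])⟩
  have hu : IsUnit E := by simpa using hnil.isUnit_add_one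
  obtain ⟨F, hF⟩ := hu
  have hcF : Commute θ (↑F⁻¹ : Module.End k V) := by
    rw [← hF] at hc
    exact hc.units_inv_right
  refine ⟨z * (↑F⁻¹ : Module.End k V), ?_⟩
  have : higSum m θ (z * (↑F⁻¹ : Module.End k V)) = E * (↑F⁻¹ : Module.End k V) := by
    rw [hE, higSum, higSum, Finset.sum_mul]
    refine Finset.sum_congr rfl fun i _ => ?_
    rw [mul_assoc, mul_assoc, ← (hcF.pow_left (m - i)).eq]
    simp only [mul_assoc]
  rw [this, ← hF, Units.mul_inv]

/-- finite evaluation of a power series at `γ` -/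
noncomputable def evS {R : Type*} [Ring R] (γ : R) (q : ℕ) (f : PowerSeries R) : R :=
  ∑ i ∈ Finset.range q, γ ^ i * PowerSeries.coeff i f

lemma evS_add {R : Type*} [Ring R] (γ : R) (q : ℕ) (f g : PowerSeries R) :
    evS γ q (f + g) = evS γ q f + evS γ q g := by
  simp [evS, mul_add, Finset.sum_add_distrib]

lemma evS_C_mul {R : Type*} [Ring R] (γ : R) (q : ℕ) (a : R) (h : Commute a γ)
    (f : PowerSeries R) : evS γ q (PowerSeries.C a * f) = a * evS γ q f := by
  simp only [evS, PowerSeries.coeff_C_mul, Finset.mul_sum]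
  refine Finset.sum_congr rfl fun i _ => ?_
  rw [← mul_assoc, ← (h.pow_right i).eq, mul_assoc]

lemma evS_X_mul {R : Type*} [Ring R] (γ : R) (q : ℕ) (h : γ ^ q = 0)
    (f : PowerSeries R) : evS γ q (PowerSeries.X * f) = γ * evS γ q f := by
  have h1 : ∑ i ∈ Finset.range (q + 1), γ ^ i * PowerSeries.coeff i (PowerSeries.X * f)
      = evS γ q (PowerSeries.X * f) := by
    rw [Finset.sum_range_succ, h, zero_mul, add_zero, evS]
  rw [← h1, Finset.sum_range_succ']
  simp only [PowerSeries.coeff_succ_X_mul, PowerSeries.coeff_zero_X_mul, mul_zero, add_zero]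
  rw [evS, Finset.mul_sum]
  refine Finset.sum_congr rfl fun i _ => ?_
  rw [pow_succ', mul_assoc]

lemma evS_C {R : Type*} [Ring R] (γ : R) (q : ℕ) (h : γ ^ q = 0) (a : R) :
    evS γ q (PowerSeries.C a) = a := by
  rcases q with _ | q
  · have h1 : (1 : R) = 0 := by simpa using h
    rw [← mul_one a, h1, mul_zero, ← mul_one (evS _ _ _), h1, mul_zero]
  · rw [evS, Finset.sum_range_succ', Finset.sum_eq_zero]
    · simp
    · intro i _
      simp [PowerSeries.coeff_C]

lemma key {k R : Type*} [Field k] [Ring R] [Algebra k R] (m : ℕ) [Fact (m + 1).Prime]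
    [CharP k (m + 1)] (α β γ φ s : R)
    (hαβ : Commute α β) (hαγ : Commute α γ) (hβγ : Commute β γ)
    (hα : α ^ (m + 1) = 0) (hβ : β ^ (m + 1) = 0) (q : ℕ) (hγ : γ ^ q = 0)
    (hφ : higSum m α φ = 1) (hs : (α + β * γ) * s = 0) :
    ∃ z, (α + β * γ) ^ m * z = s := by
  let u : PowerSeries R := PowerSeries.C α + PowerSeries.X * PowerSeries.C β
  have hXc : ∀ f : PowerSeries R, Commute PowerSeries.X f :=
    fun f => (PowerSeries.commute_X f).symm
  have hCC : ∀ {a b : R}, Commute a b → Commute (PowerSeries.C a) (PowerSeries.C b) :=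
    fun h => h.map PowerSeries.C
  have hu : u ^ (m + 1) = 0 := by
    refine add_pow_eq_zero_of_commute (k := k) ?_ ?_ ?_
    · exact ((hXc _).symm).mul_right (hCC hαβ)
    · rw [← map_pow, hα, map_zero]
    · rw [(hXc _).mul_pow, ← map_pow, hβ, map_zero, mul_zero]
  let T : PowerSeries R := PowerSeries.X - PowerSeries.C γ
  have huT : Commute u T := by
    refine Commute.sub_right (hXc _).symm ?_
    exact Commute.add_left (hCC hαγ) ((hXc _).mul_left (hCC hβγ))
  have hT : ∀ f, T * f = 0 → f = 0 := by
    intro f hf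
    have h1 : PowerSeries.X * f = PowerSeries.C γ * f := by
      rw [← sub_eq_zero, ← sub_mul]; exact hf
    have h2 : ∀ j, PowerSeries.X ^ j * f = PowerSeries.C γ ^ j * f := by
      intro j
      induction j with
      | zero => simp
      | succ j ih =>
        rw [pow_succ', mul_assoc, ih, ← mul_assoc, (hXc _).eq, mul_assoc, h1, ← mul_assoc,
          ← pow_succ]
    have h3 := h2 q
    rw [← map_pow, hγ, map_zero, zero_mul] at h3
    exact PowerSeries.X_pow_mul_cancel (k := q) (by rw [h3, mul_zero])
  set E := higSum m u (PowerSeries.C φ) with hE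
  have hE0 : PowerSeries.constantCoeff E = ((1 : Rˣ) : R) := by
    rw [hE, higSum, map_sum, Units.val_one, ← hφ, higSum]
    refine Finset.sum_congr rfl fun i _ => ?_
    simp [u]
  let F := PowerSeries.invOfUnit E 1
  have hEF : E * F = 1 := PowerSeries.mul_invOfUnit E 1 hE0
  have hFE : F * E = 1 := PowerSeries.invOfUnit_mul E 1 hE0
  have hcE : u * E = E * u := higSum_commute m u _ hu
  have hcF : Commute F u := by
    have : F * (u * E) * F = F * (E * u) * F := by rw [hcE]
    rw [← mul_assoc, mul_assoc _ E F, hEF, mul_one, ← mul_assoc, hFE, one_mul] at this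
    exact this
  -- the chase
  have hus : u * PowerSeries.C s = T * PowerSeries.C (β * s) := by
    have h1 : α * s = - (γ * (β * s)) := by
      rw [← mul_assoc, ← hβγ.eq, eq_neg_iff_add_eq_zero, ← add_mul, hs]
    simp only [u, T, add_mul, sub_mul]
    rw [← map_mul, h1, mul_assoc, ← map_mul, ← map_mul, map_neg]
    abel
  have hw : u ^ m * PowerSeries.C (β * s) = 0 := by
    apply hT
    rw [← mul_assoc, ← (huT.pow_left m).eq, mul_assoc, ← hus, ← mul_assoc, ← pow_succ, hu,
      zero_mul]
  obtain ⟨g, hg⟩ := higSum_eq_left m u (PowerSeries.C φ) _ hw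
  have hw' : PowerSeries.C (β * s) = u * (F * g) := by
    rw [← mul_assoc, ← hcF.eq, mul_assoc, ← hg, ← hE, ← mul_assoc, hFE, one_mul]
  have hd : u * (PowerSeries.C s - T * (F * g)) = 0 := by
    rw [mul_sub, hus, ← mul_assoc, huT.eq, mul_assoc, ← hw', sub_self]
  have hd' := higSum_eq_right m u (PowerSeries.C φ) _ hd
  set d := PowerSeries.C s - T * (F * g) with hdd
  have hfin : d = u ^ m * (F * (PowerSeries.C φ * d)) := by
    rw [← mul_assoc, ← (hcF.pow_right m).eq, mul_assoc, ← mul_assoc (u ^ m), ← hd', ← hE,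
      ← mul_assoc, hFE, one_mul]
  have hevu : ∀ f, evS γ q (u * f) = (α + β * γ) * evS γ q f := by
    intro f
    simp only [u]
    rw [add_mul, evS_add, evS_C_mul _ _ _ hαγ, mul_assoc, evS_X_mul _ _ hγ,
      evS_C_mul _ _ _ hβγ, add_mul, hβγ.eq, mul_assoc]
  have hevup : ∀ j f, evS γ q (u ^ j * f) = (α + β * γ) ^ j * evS γ q f := by
    intro j
    induction j with
    | zero => simp
    | succ j ih => intro f; rw [pow_succ', mul_assoc, hevu, ih, pow_succ', mul_assoc]
  have hevT : ∀ f, evS γ q (T * f) = 0 := by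
    intro f
    have h1 : T * f + PowerSeries.C γ * f = PowerSeries.X * f := by simp [T, sub_mul]
    have h2 := congrArg (evS γ q) h1
    rw [evS_add, evS_X_mul _ _ hγ, evS_C_mul _ _ _ (Commute.refl γ)] at h2
    simpa using h2
  refine ⟨evS γ q (F * (PowerSeries.C φ * d)), ?_⟩
  rw [← hevup, ← hfin]
  have h1 : d + T * (F * g) = PowerSeries.C s := by simp [hdd]
  have h2 := congrArg (evS γ q) h1
  rw [evS_add, hevT, add_zero, evS_C _ _ hγ] at h2
  exact h2

lemma hig_transfer {k V : Type*} [Field k] [AddCommGroup V] [Module k V] (m : ℕ)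
    [Fact (m + 1).Prime] [CharP k (m + 1)] (α β γ : Module.End k V)
    (hαβ : Commute α β) (hαγ : Commute α γ) (hβγ : Commute β γ)
    (hα : α ^ (m + 1) = 0) (hβ : β ^ (m + 1) = 0) (q : ℕ) (hγ : γ ^ q = 0)
    (h : ∃ φ, higSum m α φ = 1) : ∃ φ, higSum m (α + β * γ) φ = 1 := by
  obtain ⟨φ, hφ⟩ := h
  set θ := α + β * γ with hθ
  have hθp : θ ^ (m + 1) = 0 := add_pow_eq_zero_of_commute (k := k) (hαβ.mul_right hαγ) hα
          (by rw [hβγ.mul_pow, hβ, zero_mul])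
  obtain ⟨g, hg⟩ := (LinearMap.ker θ).subtype.exists_leftInverse_of_injective
    (Submodule.ker_subtype _)
  let s : Module.End k V := (LinearMap.ker θ).subtype ∘ₗ g
  have hs : θ * s = 0 := by
    ext v
    exact (g v).2
  obtain ⟨z, hz⟩ := key (k := k) m α β γ φ s hαβ hαγ hβγ hα hβ q hγ hφ hs
  refine hig_of_exact m θ z hθp fun v hv => ?_
  have h1 := LinearMap.congr_fun hz v
  have h2 := LinearMap.congr_fun hg ⟨v, hv⟩
  have h3 : s v = v := congrArg Subtype.val h2
  rw [h3] at h1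
  exact h1

lemma trunc_exact {k : Type*} [Field k] (m : ℕ) (a : TruncPoly k (m + 1))
    (h : (Ideal.Quotient.mk _ Polynomial.X : TruncPoly k (m + 1)) * a = 0) :
    ∃ b, a = (Ideal.Quotient.mk _ Polynomial.X : TruncPoly k (m + 1)) ^ m * b := by
  obtain ⟨f, rfl⟩ := Ideal.Quotient.mk_surjective a
  rw [← map_mul, Ideal.Quotient.eq_zero_iff_mem, Ideal.mem_span_singleton] at h
  obtain ⟨c, hc⟩ := h
  refine ⟨Ideal.Quotient.mk _ c, ?_⟩
  rw [← map_pow, ← map_mul]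
  congr 1
  apply mul_left_cancel₀ Polynomial.X_ne_zero
  rw [hc, pow_succ']
  ring

lemma proj_iff_hig {k V : Type*} [Field k] [AddCommGroup V] [Module k V] (m : ℕ)
    {A : Type*} [CommRing A] [Algebra k A] [Module A V] [IsScalarTower k A V] (x : A)
    (hx0 : x ^ (m + 1) = 0) (hxe : ∀ a, x * a = 0 → ∃ b, a = x ^ m * b)
    (hxs : ∀ a : A, ∃ f : Polynomial k, Polynomial.aeval x f = a)
    (θ : Module.End k V) (hθ : θ ^ (m + 1) = 0)
    (hX : ∀ v : V, x • v = θ v) :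
    Module.Projective (A) V ↔ ∃ φ, higSum m θ φ = 1 := by
  have hXj : ∀ (j : ℕ) (v : V), x ^ j • v = (θ ^ j) v := by
    intro j
    induction j with
    | zero => simp
    | succ j ih => intro v; rw [pow_succ', mul_smul, ih, hX, pow_succ', Module.End.mul_apply]
  constructor
  · intro hP
    obtain ⟨σ, hσ⟩ := hP.out
    have hex : ∀ v : LinearMap.ker θ, ∃ w, (θ ^ m) w = v := by
      rintro ⟨v, hv⟩
      rw [LinearMap.mem_ker] at hv
      have h1 : x • σ v = 0 := by rw [← map_smul, hX, hv, map_zero]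
      have h2 : ∀ i, ∃ b, σ v i = x ^ m * b := fun i =>
        hxe _ (by
          have := DFunLike.congr_fun h1 i
          simpa using this)
      choose b hb using h2
      let w : V →₀ A := Finsupp.onFinset (σ v).support
        (fun i => by classical exact if σ v i = 0 then 0 else b i)
        (fun i hi => by
          rw [Finsupp.mem_support_iff]
          intro h0
          exact hi (if_pos h0))
      have hw : x ^ m • w = σ v := by
        ext i
        rw [Finsupp.smul_apply, smul_eq_mul, Finsupp.onFinset_apply]
        split_ifs with h0
        · rw [h0, mul_zero]
        · rw [← hb]
      refine ⟨Finsupp.linearCombination _ id w, ?_⟩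
      rw [← hXj, ← map_smul, hw, hσ]
    have hsub : LinearMap.ker θ ≤ LinearMap.range (θ ^ m) := by
      intro v hv
      obtain ⟨w, hw⟩ := hex ⟨v, hv⟩
      exact ⟨w, hw⟩
    obtain ⟨g, hg⟩ := (θ ^ m).rangeRestrict.exists_rightInverse_of_surjective
      (LinearMap.range_rangeRestrict _)
    obtain ⟨z, hz⟩ := LinearMap.exists_extend g
    refine hig_of_exact m θ z hθ fun v hv => ?_
    have h1 := LinearMap.congr_fun hz ⟨v, hsub hv⟩
    have h2 := LinearMap.congr_fun hg ⟨v, hsub hv⟩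
    have h3 : z v = g ⟨v, hsub hv⟩ := h1
    rw [h3]
    exact congrArg Subtype.val h2
  · rintro ⟨φ, hφ⟩
    let N := V →₀ A
    let π : N →ₗ[A] V := Finsupp.linearCombination _ id
    have hπ : Function.Surjective π := Finsupp.linearCombination_id_surjective _ _
    obtain ⟨τ, hτ⟩ := (π.restrictScalars k).exists_rightInverse_of_surjective
      (LinearMap.range_eq_top.2 hπ)
    let σ : V →ₗ[k] N := ∑ i ∈ Finset.range (m + 1),
      (Algebra.lsmul k k N (x ^ i)) ∘ₗ τ ∘ₗ φ ∘ₗ (θ ^ (m - i))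
    have hσ : ∀ v, σ v = ∑ i ∈ Finset.range (m + 1), x ^ i • τ (φ ((θ ^ (m - i)) v)) := by
      intro v
      simp only [σ, LinearMap.sum_apply]
      rfl
    have hpw : ∀ (j : ℕ) (v : V), (θ ^ j) (θ v) = (θ ^ (j + 1)) v := by
      intro j v
      rw [pow_succ, Module.End.mul_apply]
    have hσx : ∀ v, σ (x • v) = x • σ v := by
      intro v
      rw [hσ, hσ, Finset.sum_range_succ', Finset.sum_range_succ, smul_add, smul_smul, ← pow_succ',
        hx0, zero_smul, add_zero, Finset.smul_sum, hX, Nat.sub_zero, hpw, hθ]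
      simp only [LinearMap.zero_apply, map_zero, smul_zero, add_zero]
      refine Finset.sum_congr rfl fun i hi => ?_
      rw [Finset.mem_range] at hi
      have hi' : m - (i + 1) + 1 = m - i := by omega
      rw [smul_smul, ← pow_succ', hpw, hi']
    have hσa : ∀ (a : A) v, σ (a • v) = a • σ v := by
      intro a
      obtain ⟨f, rfl⟩ := hxs a
      induction f using Polynomial.induction_on' with
      | add f g hf hg => intro v; rw [map_add, add_smul, map_add, hf, hg, add_smul]
      | monomial n c =>
        have hxn : ∀ (j : ℕ) v, σ (x ^ j • v) = x ^ j • σ v := by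
          intro j
          induction j with
          | zero => simp
          | succ j ih => intro v; rw [pow_succ', mul_smul, hσx, ih, mul_smul]
        intro v
        have h1 : Polynomial.aeval x (Polynomial.monomial n c) = c • x ^ n := by
          rw [Polynomial.aeval_monomial, Algebra.smul_def]
        rw [h1, smul_assoc, map_smul, hxn, smul_assoc]
    let σ' : V →ₗ[A] N := { toFun := σ, map_add' := map_add σ, map_smul' := hσa }
    refine ⟨σ', fun v => ?_⟩
    change π (σ v) = v
    rw [hσ, map_sum]
    have hv := LinearMap.congr_fun hφ v
    rw [higSum, LinearMap.sum_apply] at hv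
    refine Eq.trans (Finset.sum_congr rfl fun i _ => ?_) hv
    rw [map_smul, hXj]
    have h2 := LinearMap.congr_fun hτ (φ ((θ ^ (m - i)) v))
    have h3 : π (τ (φ ((θ ^ (m - i)) v))) = φ ((θ ^ (m - i)) v) := h2
    rw [h3]
    rfl

lemma proj_iff_hig' {k V : Type*} [Field k] [AddCommGroup V] [Module k V] (m : ℕ)
    (θ : Module.End k V) (hθ : θ ^ (m + 1) = 0) :
    (letI := truncModEnd θ hθ
     Module.Projective (TruncPoly k (m + 1)) V) ↔ ∃ φ, higSum m θ φ = 1 := by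
  letI := truncModEnd θ hθ
  have hsm : ∀ (a : TruncPoly k (m + 1)) (v : V), a • v = truncHom θ hθ a v := fun _ _ => rfl
  haveI : IsScalarTower k (TruncPoly k (m + 1)) V := ⟨fun c a v => by
    rw [hsm, hsm, map_smul]; rfl⟩
  have hx : ∀ f : Polynomial k, Polynomial.aeval
      (Ideal.Quotient.mk _ Polynomial.X : TruncPoly k (m + 1)) f = Ideal.Quotient.mk _ f := by
    intro f
    have := Polynomial.aeval_algHom_apply
      (Ideal.Quotient.mkₐ k (Ideal.span {(Polynomial.X : Polynomial k) ^ (m + 1)})) Polynomial.X f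
    rw [Polynomial.aeval_X_left_apply] at this
    exact this
  refine proj_iff_hig m (Ideal.Quotient.mk _ Polynomial.X : TruncPoly k (m + 1)) ?_
    (trunc_exact m) ?_ θ hθ fun v => ?_
  · rw [← map_pow, Ideal.Quotient.eq_zero_iff_mem]
    exact Ideal.mem_span_singleton_self _
  · intro a
    obtain ⟨f, rfl⟩ := Ideal.Quotient.mk_surjective a
    exact ⟨f, hx f⟩
  · rw [hsm]
    have h1 : truncHom θ hθ (Ideal.Quotient.mk _ Polynomial.X) =
        Polynomial.aeval θ (Polynomial.X : Polynomial k) :=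
      rfl
    rw [h1, Polynomial.aeval_X]

theorem statement0 (k : Type*) [Field k] (p : ℕ) [Fact p.Prime] [CharP k p]
    (V : Type*) [AddCommGroup V] [Module k V]
    (α β γ : Module.End k V)
    (hαβ : Commute α β) (hαγ : Commute α γ) (hβγ : Commute β γ)
    (hα : α ^ p = 0) (hβ : β ^ p = 0)
    (r : ℕ) (hr : 1 ≤ r) (hγ : γ ^ (p ^ r) = 0) :
    (letI := truncModEnd α hα
     Module.Projective (TruncPoly k p) V) ↔
    (letI := truncModEnd (α + β * γ)
        (add_pow_eq_zero_of_commute (k := k) (hαβ.mul_right hαγ) hα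
          (by rw [hβγ.mul_pow, hβ, zero_mul]))
     Module.Projective (TruncPoly k p) V) := by
  obtain ⟨m, rfl⟩ : ∃ m, p = m + 1 :=
    ⟨p - 1, by have := (Fact.out : p.Prime).pos; omega⟩
  rw [proj_iff_hig', proj_iff_hig']
  constructor
  · exact hig_transfer m α β γ hαβ hαγ hβγ hα hβ _ hγ
  · intro h
    have h1 := hig_transfer m (α + β * γ) β (-γ) (hαβ.add_left ((Commute.refl β).mul_left hβγ.symm))
      ((hαγ.add_left (hβγ.mul_left (Commute.refl γ))).neg_right) hβγ.neg_right
      (add_pow_eq_zero_of_commute (k := k) (hαβ.mul_right hαγ) hα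
          (by rw [hβγ.mul_pow, hβ, zero_mul])) hβ ((m + 1) ^ r)
      (by rw [neg_pow, hγ, mul_zero]) h
    simpa using h1
end

section
/- Let k be a field of characteristic p > 0, let V be a k-vector space, and let δ, b_1, …, b_t, b_1', …, b_t' be pairwise commuting k-linear endomorphisms of V, each of which is p-nilpotent (i.e., its p-th power is 0). Then V, regarded as a k[u]/(u^p)-module with u acting as δ, is projective if and only if V, regarded as a k[v]/(v^p)-module with v acting as δ + Σ_{i=1}^{t} b_i∘b_i', is projective. -/
open Polynomial TensorProduct

/-- In an algebra over a field of prime characteristic `p`, a finite sum of pairwise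
commuting `p`-nilpotent elements is again `p`-nilpotent. -/
lemma sum_pow_eq_zero_of_commute {k : Type*} [Field k] {p : ℕ} [Fact p.Prime] [CharP k p]
    {R : Type*} [Ring R] [Algebra k R] {ι : Type*} (s : Finset ι) (f : ι → R)
    (hcomm : ∀ i ∈ s, ∀ j ∈ s, Commute (f i) (f j))
    (hnil : ∀ i ∈ s, f i ^ p = 0) : (∑ i ∈ s, f i) ^ p = 0 := by
  induction s using Finset.cons_induction with
  | empty => simp [zero_pow (Fact.out : p.Prime).ne_zero]
  | cons a s ha ih =>
    rw [Finset.sum_cons]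
    refine add_pow_eq_zero_of_commute (k := k)
      (Commute.sum_right s f (f a) fun i hi =>
        hcomm a (Finset.mem_cons_self a s) i (Finset.mem_cons_of_mem hi))
      (hnil a (Finset.mem_cons_self a s))
      (ih (fun i hi j hj =>
          hcomm i (Finset.mem_cons_of_mem hi) j (Finset.mem_cons_of_mem hj))
        (fun i hi => hnil i (Finset.mem_cons_of_mem hi)))

/-- If `δ, b₁, …, b_t, b₁', …, b_t'` are pairwise commuting `p`-nilpotent elements of an
algebra over a field of prime characteristic `p`, then `δ + ∑ i, b i * b' i` is `p`-nilpotent. -/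
lemma delta_add_sum_mul_pow_eq_zero {k : Type*} [Field k] {p : ℕ} [Fact p.Prime] [CharP k p]
    {R : Type*} [Ring R] [Algebra k R] {t : ℕ} (δ : R) (b b' : Fin t → R)
    (hδb : ∀ i, Commute δ (b i)) (hδb' : ∀ i, Commute δ (b' i))
    (hbb : ∀ i j, Commute (b i) (b j)) (hbb' : ∀ i j, Commute (b i) (b' j))
    (hb'b' : ∀ i j, Commute (b' i) (b' j))
    (hδ : δ ^ p = 0) (hb : ∀ i, b i ^ p = 0) (hb' : ∀ i, b' i ^ p = 0) :
    (δ + ∑ i, b i * b' i) ^ p = 0 := by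
  refine add_pow_eq_zero_of_commute (k := k)
    (Commute.sum_right _ _ _ fun i _ => (hδb i).mul_right (hδb' i)) hδ ?_
  refine sum_pow_eq_zero_of_commute (k := k) Finset.univ _ ?_ ?_
  · intro i _ j _
    exact ((hbb i j).mul_left ((hbb' j i).symm)).mul_right
      ((hbb' i j).mul_left (hb'b' i j))
  · intro i _
    rw [(hbb' i i).mul_pow, hb i, zero_mul]

/-- exactness of the periodic complex -/
def TrEx {A : Type*} [CommRing A] (p : ℕ) (M : Type*) [AddCommGroup M] [Module A M] (u : A) : Prop :=
  ∀ x : M, u • x = 0 → ∃ y : M, x = u ^ (p - 1) • y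

lemma TrEx.pow {A : Type*} [CommRing A] {p : ℕ} {M : Type*} [AddCommGroup M] [Module A M] {u : A}
    (h : TrEx p M u) (j : ℕ) (hj : j ≤ p) :
    ∀ x : M, u ^ j • x = 0 → ∃ y : M, x = u ^ (p - j) • y := by
  induction j with
  | zero => intro x hx; exact ⟨0, by simpa using hx⟩
  | succ j ih =>
    intro x hx
    obtain ⟨y, hy⟩ := h (u ^ j • x) (by rw [smul_smul, ← pow_succ']; exact hx)
    have h1 : u ^ (p - 1) = u ^ j * u ^ (p - (j + 1)) := by
      rw [← pow_add]; congr 1; omega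
    obtain ⟨z, hz⟩ := ih (by omega) (x - u ^ (p - (j + 1)) • y) (by
      rw [smul_sub, hy, h1, mul_smul, sub_self])
    have h2 : u ^ (p - j) = u ^ (p - (j + 1)) * u := by
      rw [← pow_succ]; congr 1; omega
    refine ⟨y + u • z, ?_⟩
    rw [smul_add, smul_smul, ← h2, ← hz]; abel

section poly
variable {R : Type*} [CommRing R] {V : Type*} [AddCommGroup V] [Module R V]

lemma pm_decomp (g : PolynomialModule R V) :
    ∃ (c : V) (h : PolynomialModule R V),
      g = PolynomialModule.single R 0 c + (X : R[X]) • h := by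
  induction g using PolynomialModule.induction_linear with
  | zero => exact ⟨0, 0, by simp⟩
  | add x y hx hy =>
    obtain ⟨c, h, rfl⟩ := hx
    obtain ⟨c', h', rfl⟩ := hy
    refine ⟨c + c', h + h', ?_⟩
    rw [PolynomialModule.single_add, smul_add]; abel
  | single n m =>
    cases n with
    | zero => exact ⟨m, 0, by simp⟩
    | succ n =>
      refine ⟨0, PolynomialModule.single R n m, ?_⟩
      rw [← monomial_one_one_eq_X, PolynomialModule.monomial_smul_single]
      simp [add_comm]

lemma pm_X_inj (m : ℕ) (g h : PolynomialModule R V) (e : (X : R[X]) ^ m • g = (X : R[X]) ^ m • h) :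
    g = h := by
  ext n
  have := congrArg (fun f => PolynomialModule.coeff f (n + m)) e
  simpa [X_pow_eq_monomial] using this

lemma pm_claim1 {p : ℕ} (hp : 0 < p) (θ b : R) (hN : (C θ + X * C b : R[X]) ^ p = 0)
    (h : TrEx p V θ) (m : ℕ) : ∀ f g : PolynomialModule R V,
    (C θ + X * C b : R[X]) • f = (X : R[X]) ^ m • g →
    ∃ z h : PolynomialModule R V,
      f = (C θ + X * C b : R[X]) ^ (p - 1) • z + (X : R[X]) ^ m • h := by
  induction m with
  | zero => intro f g _; exact ⟨0, f, by simp⟩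
  | succ m ih =>
    intro f g e
    obtain ⟨z, h', rfl⟩ := ih f ((X : R[X]) • g) (by rw [e, pow_succ, mul_smul])
    have hN' : (C θ + X * C b : R[X]) * (C θ + X * C b : R[X]) ^ (p - 1) = 0 := by
      rw [mul_pow_sub_one hp.ne', hN]
    rw [smul_add, smul_smul, hN', zero_smul, zero_add, smul_comm, pow_succ, mul_smul] at e
    have e2 := pm_X_inj _ _ _ e
    have e3 := congrArg (PolynomialModule.eval (0 : R)) e2
    simp only [PolynomialModule.eval_smul] at e3
    simp at e3
    obtain ⟨w, hw⟩ := h _ e3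
    obtain ⟨c, q, hq⟩ := pm_decomp (h' - (C θ + X * C b : R[X]) ^ (p - 1) • PolynomialModule.single R 0 w)
    have hc := congrArg (PolynomialModule.eval (0 : R)) hq
    simp only [map_sub, map_add, PolynomialModule.eval_smul, hw] at hc
    simp at hc
    rw [← hc, PolynomialModule.single_zero, zero_add, sub_eq_iff_eq_add] at hq
    refine ⟨z + (X : R[X]) ^ m • PolynomialModule.single R 0 w, q, ?_⟩
    rw [hq]
    module

lemma TrEx.step {k : Type*} [Field k] {p : ℕ} [Fact p.Prime] [CharP k p] [Algebra k R]
    (θ a b : R) (hθ : θ ^ p = 0) (ha : a ^ p = 0) (hb : b ^ p = 0) (h : TrEx p V θ) :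
    TrEx p V (θ + a * b) := by
  have hp : 0 < p := (Fact.out : p.Prime).pos
  intro x hx
  set N : R[X] := C θ + X * C b with hNdef
  have hN : N ^ p = 0 := by
    refine add_pow_eq_zero_of_commute (k := k) (Commute.all _ _) ?_ ?_
    · rw [← C_pow, hθ, C_0]
    · rw [mul_pow, ← C_pow, hb, C_0, mul_zero]
  have c1 := pm_claim1 (V := V) hp θ b hN h p
  rw [← hNdef] at c1
  set I : Submodule R[X] (PolynomialModule R V) :=
    LinearMap.range (LinearMap.lsmul R[X] (PolynomialModule R V) (X ^ p)) with hI
  have memI : ∀ f, f ∈ I ↔ ∃ g, (X : R[X]) ^ p • g = f := fun f => by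
    simp [hI, LinearMap.mem_range]
  have hQ : TrEx p (PolynomialModule R V ⧸ I) N := by
    intro f hf
    obtain ⟨f, rfl⟩ := Submodule.Quotient.mk_surjective _ f
    rw [← Submodule.Quotient.mk_smul, Submodule.Quotient.mk_eq_zero, memI] at hf
    obtain ⟨g, hg⟩ := hf
    obtain ⟨z, h', e⟩ := c1 f g hg.symm
    refine ⟨Submodule.Quotient.mk z, ?_⟩
    rw [← Submodule.Quotient.mk_smul, Submodule.Quotient.eq, memI]
    exact ⟨h', by rw [e]; abel⟩
  set s : V → PolynomialModule R V := PolynomialModule.single R 0 with hs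
  have hCs : ∀ (r : R) (y : V), (C r : R[X]) • s y = s (r • y) := fun r y => by
    rw [hs, ← monomial_zero_left, PolynomialModule.monomial_smul_single]
  have hNv : N = C (θ + a * b) + (X - C a) * C b := by
    rw [hNdef, C_add, C_mul]; ring
  have hNx : ∀ y : V, (θ + a * b) • y = 0 → N • s y = (X - C a) • s (b • y) := by
    intro y hy
    rw [hNv, add_smul, hCs, hy, mul_smul, hCs]
    simp [hs]
  have hpow : ∀ (j : ℕ) (y : V), (θ + a * b) • y = 0 →
      N ^ j • s y = ((X - C a) ^ j : R[X]) • s (b ^ j • y) := by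
    intro j
    induction j with
    | zero => intro y _; simp
    | succ j ih =>
      intro y hy
      rw [pow_succ', mul_smul, ih y hy, smul_comm, hNx _ (by rw [smul_comm, hy, smul_zero]),
        smul_smul, smul_smul, ← pow_succ, ← pow_succ']
  have h0 : N ^ (p - 1) • s (b • x) = 0 := by
    rw [hpow _ _ (by rw [smul_comm, hx, smul_zero]), smul_smul, pow_sub_one_mul hp.ne', hb,
      zero_smul]
    simp [hs]
  obtain ⟨y, hy⟩ := hQ.pow (p - 1) (by omega) (Submodule.Quotient.mk (s (b • x))) (by
    rw [← Submodule.Quotient.mk_smul, h0, Submodule.Quotient.mk_zero])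
  obtain ⟨y, rfl⟩ := Submodule.Quotient.mk_surjective _ y
  rw [show p - (p - 1) = 1 by omega, pow_one, ← Submodule.Quotient.mk_smul,
    Submodule.Quotient.eq, memI] at hy
  obtain ⟨g, hg⟩ := hy
  obtain ⟨z, h', e⟩ := c1 (s x - (X - C a) • y) ((X - C a) • g) (by
    rw [smul_comm _ _ g, hg, smul_sub, hNx x hx, smul_sub, smul_comm N])
  refine ⟨PolynomialModule.eval a z, ?_⟩
  have e2 := congrArg (PolynomialModule.eval a) e
  simp only [map_sub, map_add, PolynomialModule.eval_smul, hNdef, hs,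
    PolynomialModule.eval_single] at e2
  simpa [ha, mul_comm b a] using e2

lemma TrEx.sum {k : Type*} [Field k] {p : ℕ} [Fact p.Prime] [CharP k p] [Algebra k R]
    {ι : Type*} (s : Finset ι) (θ : R) (a b : ι → R) (hθ : θ ^ p = 0) (ha : ∀ i, a i ^ p = 0)
    (hb : ∀ i, b i ^ p = 0) (h : TrEx p V θ) :
    TrEx p V (θ + ∑ i ∈ s, a i * b i) := by
  induction s using Finset.cons_induction with
  | empty => simpa using h
  | cons i s hi ih =>
    rw [Finset.sum_cons, add_comm (a i * b i), ← add_assoc]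
    refine TrEx.step (k := k) _ _ _ ?_ (ha i) (hb i) ih
    refine add_pow_eq_zero_of_commute (k := k) (Commute.all _ _) hθ ?_
    refine sum_pow_eq_zero_of_commute (k := k) s _ (fun _ _ _ _ => Commute.all _ _) ?_
    intro i _
    rw [mul_pow, ha, zero_mul]

end poly

section proj
variable {k : Type*} [Field k] {p : ℕ}

noncomputable def tu (k : Type*) [Field k] (p : ℕ) : TruncPoly k p := Ideal.Quotient.mk _ X

lemma tu_pow : tu k p ^ p = 0 := by
  rw [tu, ← map_pow, Ideal.Quotient.eq_zero_iff_mem]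
  exact Ideal.mem_span_singleton_self _

lemma tu_decomp (f : TruncPoly k p) : ∃ (c : k) (g : TruncPoly k p),
    f = algebraMap k _ c + tu k p * g := by
  obtain ⟨f, rfl⟩ := Ideal.Quotient.mk_surjective f
  refine ⟨f.coeff 0, Ideal.Quotient.mk _ f.divX, ?_⟩
  conv_lhs => rw [← f.X_mul_divX_add]
  rw [map_add, map_mul, add_comm]
  rfl

lemma tu_ex (hp : 0 < p) (f : TruncPoly k p) (hf : tu k p * f = 0) :
    ∃ c : k, f = tu k p ^ (p - 1) * algebraMap k _ c := by
  obtain ⟨f, rfl⟩ := Ideal.Quotient.mk_surjective f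
  rw [tu, ← map_mul, Ideal.Quotient.eq_zero_iff_mem, Ideal.mem_span_singleton,
    ← mul_pow_sub_one hp.ne', mul_dvd_mul_iff_left X_ne_zero] at hf
  obtain ⟨g, rfl⟩ := hf
  obtain ⟨c, g', hg⟩ := tu_decomp (p := p) (Ideal.Quotient.mk _ g)
  refine ⟨c, ?_⟩
  rw [map_mul, hg, mul_add, ← mul_assoc, map_pow]
  change _ + tu k p ^ (p - 1) * tu k p * g' = _
  rw [pow_sub_one_mul hp.ne', tu_pow, zero_mul, add_zero]
  rfl

lemma tu_smul_inj (hp : 0 < p) (c : k) (h : tu k p ^ (p - 1) * algebraMap k _ c = 0) : c = 0 := by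
  have h' : Ideal.Quotient.mk (Ideal.span {(X : k[X]) ^ p}) (X ^ (p - 1) * C c) = 0 := by
    rw [map_mul, map_pow]; exact h
  rw [Ideal.Quotient.eq_zero_iff_mem, Ideal.mem_span_singleton, X_pow_dvd_iff] at h'
  have := h' (p - 1) (by omega)
  simpa using this

lemma fs_ex {A : Type*} [CommRing A] [Algebra k A] (u : A)
    (hex : ∀ f, u * f = 0 → ∃ c : k, f = u ^ (p - 1) * algebraMap k A c)
    (hinj : ∀ c : k, u ^ (p - 1) * algebraMap k A c = 0 → c = 0) {ι : Type*} (f : ι →₀ A) (hf : u • f = 0) :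
    ∃ c : ι →₀ k, f = u ^ (p - 1) • c.mapRange (algebraMap k A) (map_zero _) := by
  classical
  have : ∀ i, ∃ c : k, f i = u ^ (p - 1) * algebraMap k _ c := fun i =>
    hex _ (by simpa using DFunLike.congr_fun hf i)
  choose c hc using this
  refine ⟨Finsupp.onFinset f.support c ?_, ?_⟩
  · intro i hi
    rw [Finsupp.mem_support_iff]
    intro h0
    exact hi (hinj _ (by rw [← hc, h0]))
  · ext i
    simp [hc]

lemma proj_iff_gen {A : Type*} [CommRing A] [Algebra k A] (u : A) (hu : u ^ p = 0)
    (hex : ∀ f, u * f = 0 → ∃ c : k, f = u ^ (p - 1) * algebraMap k A c)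
    (hinj : ∀ c : k, u ^ (p - 1) * algebraMap k A c = 0 → c = 0) (V : Type*) [AddCommGroup V] [Module k V] [Module A V]
    [IsScalarTower k A V] :
    Module.Projective A V ↔ TrEx p V u := by
  classical
  constructor
  · rintro ⟨s, hs⟩ x hx
    obtain ⟨c, hc⟩ := fs_ex u hex hinj (s x) (by rw [← map_smul, hx, map_zero])
    refine ⟨Finsupp.linearCombination _ id (c.mapRange (algebraMap k A) (map_zero _)), ?_⟩
    rw [← map_smul, ← hc, hs]
  · intro h
    set K : Submodule k V := LinearMap.ker (LinearMap.lsmul A V u |>.restrictScalars k)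
    have memK : ∀ x, x ∈ K ↔ u • x = 0 := fun x => Iff.rfl
    let B := Module.Basis.ofVectorSpace k K
    have : ∀ i, ∃ y : V, (B i : V) = u ^ (p - 1) • y := fun i => h _ (B i).2
    choose v hv using this
    let φ := Finsupp.linearCombination A v
    have key : ∀ c : _ →₀ k, φ (u ^ (p - 1) • c.mapRange (algebraMap k A) (map_zero _))
        = (Finsupp.linearCombination k B c : K) := by
      intro c
      induction c using Finsupp.induction_linear with
      | zero => simp
      | add f g hf hg =>
        rw [Finsupp.mapRange_add (by simp), smul_add, map_add, hf, hg, map_add]; rfl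
      | single i c =>
        simp only [Finsupp.mapRange_single, map_smul, φ, Finsupp.linearCombination_single,
          Submodule.coe_smul, hv, algebraMap_smul]
        rw [smul_comm]
    have inj : ∀ j (f : _ →₀ A), u ^ j • f = 0 → φ f = 0 → f = 0 := by
      intro j
      induction j with
      | zero => intro f hf _; simpa using hf
      | succ j ih =>
        intro f hf h0
        refine ih f ?_ h0
        obtain ⟨c, hc⟩ := fs_ex u hex hinj (u ^ j • f) (by rw [smul_smul, ← pow_succ', hf])
        have h1 : φ (u ^ j • f) = 0 := by rw [map_smul, h0, smul_zero]
        rw [hc, key, Submodule.coe_eq_zero] at h1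
        have h2 : c = 0 := (linearIndependent_iff.mp B.linearIndependent) c h1
        rw [hc, h2]; simp
    have surj : ∀ j, j ≤ p → ∀ x : V, u ^ j • x = 0 → ∃ f, φ f = x := by
      intro j
      induction j with
      | zero => intro _ x hx; exact ⟨0, by simpa using hx.symm⟩
      | succ j ih =>
        intro hj x hx
        have hm : u ^ j • x ∈ K := by rw [memK, smul_smul, ← pow_succ', hx]
        have e := key (B.repr ⟨_, hm⟩)
        rw [B.linearCombination_repr] at e
        set F := (B.repr ⟨_, hm⟩).mapRange (algebraMap k A) (map_zero _)
        have h1 : u ^ (p - 1) = u ^ j * u ^ (p - (j + 1)) := by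
          rw [← pow_add]; congr 1; omega
        obtain ⟨f, hf⟩ := ih (by omega) (x - φ (u ^ (p - (j + 1)) • F)) (by
          rw [smul_sub, ← map_smul, smul_smul, ← h1, e, sub_self])
        exact ⟨f + u ^ (p - (j + 1)) • F, by rw [map_add, hf]; abel⟩
    have bij : Function.Bijective φ := by
      refine ⟨(injective_iff_map_eq_zero φ).mpr fun f hf => inj p f ?_ hf, fun x => surj p le_rfl x ?_⟩
      · rw [hu, zero_smul]
      · rw [hu, zero_smul]
    exact Module.Projective.of_equiv (LinearEquiv.ofBijective φ bij)

lemma proj_iff (hp : 0 < p) (V : Type*) [AddCommGroup V] [Module k V] [Module (TruncPoly k p) V]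
    [IsScalarTower k (TruncPoly k p) V] :
    Module.Projective (TruncPoly k p) V ↔ TrEx p V (tu k p) :=
  proj_iff_gen (tu k p) tu_pow (tu_ex hp) (tu_smul_inj hp) V

lemma proj_iff_end (hp : 0 < p) (V : Type*) [AddCommGroup V] [Module k V]
    (θ : Module.End k V) (hθ : θ ^ p = 0) :
    (letI := truncModEnd θ hθ
     Module.Projective (TruncPoly k p) V) ↔ ∀ x, θ x = 0 → ∃ y, x = (θ ^ (p - 1)) y := by
  letI := truncModEnd θ hθ
  have hsm : ∀ (a : TruncPoly k p) (x : V), a • x = truncHom θ hθ a x := fun _ _ => rfl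
  haveI : IsScalarTower k (TruncPoly k p) V := ⟨fun c a x => by
    rw [hsm, hsm, map_smul]; rfl⟩
  have hu : truncHom θ hθ (tu k p) = θ := by
    change Polynomial.aeval θ X = θ
    simp
  change Module.Projective (TruncPoly k p) V ↔ _
  rw [proj_iff hp]
  unfold TrEx
  simp only [hsm, map_pow, hu]

end proj

theorem statement1 (k : Type*) [Field k] (p : ℕ) [Fact p.Prime] [CharP k p]
    (V : Type*) [AddCommGroup V] [Module k V]
    (t : ℕ) (δ : Module.End k V) (b b' : Fin t → Module.End k V)
    (hδb : ∀ i, Commute δ (b i)) (hδb' : ∀ i, Commute δ (b' i))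
    (hbb : ∀ i j, Commute (b i) (b j)) (hbb' : ∀ i j, Commute (b i) (b' j))
    (hb'b' : ∀ i j, Commute (b' i) (b' j))
    (hδ : δ ^ p = 0) (hb : ∀ i, b i ^ p = 0) (hb' : ∀ i, b' i ^ p = 0) :
    (letI := truncModEnd δ hδ
     Module.Projective (TruncPoly k p) V) ↔
    (letI := truncModEnd (δ + ∑ i, b i * b' i)
        (delta_add_sum_mul_pow_eq_zero (k := k) δ b b' hδb hδb' hbb hbb' hb'b' hδ hb hb')
     Module.Projective (TruncPoly k p) V) := by
  have hp : 0 < p := (Fact.out : p.Prime).pos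
  rw [proj_iff_end hp, proj_iff_end hp]
  let S : Set (Module.End k V) := {δ} ∪ (Set.range b ∪ Set.range b')
  have hS : ∀ x ∈ S, ∀ y ∈ S, x * y = y * x := by
    rintro x (rfl | ⟨i, rfl⟩ | ⟨i, rfl⟩) y (rfl | ⟨j, rfl⟩ | ⟨j, rfl⟩)
    · rfl
    · exact hδb j
    · exact hδb' j
    · exact (hδb i).symm
    · exact hbb i j
    · exact hbb' i j
    · exact (hδb' i).symm
    · exact (hbb' j i).symm
    · exact hb'b' i j
  letI : CommRing (Algebra.adjoin k S) := Algebra.adjoinCommRingOfComm k hS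
  let d : Algebra.adjoin k S := ⟨δ, Algebra.subset_adjoin (Or.inl rfl)⟩
  let c : Fin t → Algebra.adjoin k S := fun i => ⟨b i, Algebra.subset_adjoin (Or.inr (Or.inl ⟨i, rfl⟩))⟩
  let c' : Fin t → Algebra.adjoin k S := fun i => ⟨b' i, Algebra.subset_adjoin (Or.inr (Or.inr ⟨i, rfl⟩))⟩
  have hd : d ^ p = 0 := Subtype.ext hδ
  have hc : ∀ i, c i ^ p = 0 := fun i => Subtype.ext (hb i)
  have hc' : ∀ i, c' i ^ p = 0 := fun i => Subtype.ext (hb' i)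
  have hcn : ∀ i, (-c i) ^ p = 0 := fun i => by rw [neg_pow, hc, mul_zero]
  have tr : ∀ r : Algebra.adjoin k S, TrEx p V r ↔
      ∀ x, (r : Module.End k V) x = 0 → ∃ y, x = ((r : Module.End k V) ^ (p - 1)) y :=
    fun r => Iff.rfl
  have hcoe : ((d + ∑ i, c i * c' i : Algebra.adjoin k S) : Module.End k V)
      = δ + ∑ i, b i * b' i := by
    have : ((∑ i, c i * c' i : Algebra.adjoin k S) : Module.End k V) = ∑ i, b i * b' i :=
      map_sum (Algebra.adjoin k S).val _ _
    rw [← this]; rfl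
  rw [← hcoe, ← tr, show δ = (d : Module.End k V) from rfl, ← tr]
  constructor
  · intro h
    exact TrEx.sum (k := k) Finset.univ d c c' hd hc hc' h
  · intro h
    have := TrEx.sum (k := k) Finset.univ _ (fun i => - c i) c' ?_ hcn hc' h
    · simpa [add_assoc, ← Finset.sum_add_distrib] using this
    · refine add_pow_eq_zero_of_commute (k := k) (Commute.all _ _) hd ?_
      refine sum_pow_eq_zero_of_commute (k := k) _ _ (fun _ _ _ _ => Commute.all _ _) ?_
      intro i _
      rw [mul_pow, hc, zero_mul]
end

section
/- Let k be a field of characteristic p > 0, let A and B be associative unital k-algebras, and let a ∈ A, b ∈ B satisfy a^p = 0 and b^p = 0, so that (a⊗1 + 1⊗b)^p = 0 in A ⊗_k B. Assume that each of the following holds: (i) either A is free as a k[t]/(t^p)-module with t acting by left multiplication by a, or a = 0; (ii) either B is free as a k[t]/(t^p)-module with t acting by left multiplication by b, or b = 0; and (iii) at least one of A, B is free over k[t]/(t^p) in the sense of (i), (ii). Then A ⊗_k B is free as a k[t]/(t^p)-module with t acting by left multiplication by a⊗1 + 1⊗b. -/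
open Polynomial TensorProduct

/-- `C` regarded as a module over `k[t]/(t^p)` with `t` acting by left multiplication by a
`p`-nilpotent element `c`. -/
noncomputable def truncSMul {k : Type*} [Field k] {p : ℕ} {C : Type*} [Ring C] [Algebra k C]
    (c : C) (hc : c ^ p = 0) : Module (TruncPoly k p) C :=
  Module.compHom C (truncHom c hc).toRingHom

/-- If `a ∈ A` and `b ∈ B` are `p`-nilpotent, then `a ⊗ 1 + 1 ⊗ b` is `p`-nilpotent
in `A ⊗[k] B`. -/
lemma tmul_add_tmul_pow_eq_zero {k : Type*} [Field k] {p : ℕ} [Fact p.Prime] [CharP k p]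
    {A B : Type*} [Ring A] [Ring B] [Algebra k A] [Algebra k B]
    {a : A} {b : B} (ha : a ^ p = 0) (hb : b ^ p = 0) :
    (a ⊗ₜ[k] (1 : B) + (1 : A) ⊗ₜ[k] b) ^ p = 0 := by
  refine add_pow_eq_zero_of_commute (k := k) ?_ ?_ ?_
  · show _ * _ = _ * _
    rw [Algebra.TensorProduct.tmul_mul_tmul, Algebra.TensorProduct.tmul_mul_tmul,
      one_mul, mul_one, one_mul, mul_one]
  · rw [Algebra.TensorProduct.tmul_pow, ha, one_pow, TensorProduct.zero_tmul]
  · rw [Algebra.TensorProduct.tmul_pow, hb, one_pow, TensorProduct.tmul_zero]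

lemma aux_unit {k : Type*} [Field k] {p : ℕ} [Fact p.Prime] [CharP k p]
    {S : Type*} [Ring S] [Algebra k S] (D T B : S) (hDT : D * T = T * D + 1)
    (hDB : Commute D B) (hTB : Commute T B) (hB : B ^ p = 0) :
    ∃ E : Sˣ, (E : S) * T = (T + B) * E := by
  obtain ⟨n, hn⟩ : ∃ n, p = n + 1 := ⟨p - 1, by have := (Fact.out : p.Prime).pos; omega⟩
  have hD : ∀ j : ℕ, D ^ (j + 1) * T = T * D ^ (j + 1) + ((j + 1 : ℕ) : k) • D ^ j := by
    intro j
    induction j with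
    | zero => simp [hDT]
    | succ j ih =>
      rw [pow_succ' D (j + 1), mul_assoc, ih, mul_add, ← mul_assoc, hDT, add_mul, one_mul,
        mul_smul_comm, ← pow_succ', mul_assoc, add_assoc]
      congr 1
      push_cast
      module
  let c : ℕ → k := fun j => ((j.factorial : ℕ) : k)⁻¹
  have hc : ∀ j, j < n → c (j + 1) * ((j + 1 : ℕ) : k) = c j := by
    intro j hj
    have h1 : ((j + 1 : ℕ) : k) ≠ 0 := by
      intro h
      rw [CharP.cast_eq_zero_iff k p] at h
      have := Nat.le_of_dvd (Nat.succ_pos j) h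
      omega
    simp only [c, Nat.factorial_succ, Nat.cast_mul, mul_inv]
    field_simp
  let E : S := ∑ j ∈ Finset.range (n + 1), c j • (D ^ j * B ^ j)
  have hE1 : E = 1 + (D * B) * ∑ j ∈ Finset.range n, c (j + 1) • (D * B) ^ j := by
    simp only [E, Finset.sum_range_succ', Finset.mul_sum, mul_smul_comm, ← pow_succ',
      ← hDB.mul_pow]
    simp [c, add_comm]
  have hnil : IsNilpotent (D * B) := ⟨p, by rw [hDB.mul_pow, hB, mul_zero]⟩
  have hu : IsUnit E := by
    rw [hE1]
    refine IsNilpotent.isUnit_one_add (Commute.isNilpotent_mul_right ?_ hnil)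
    refine Commute.sum_right _ _ _ fun j _ => ?_
    exact ((Commute.refl (D * B)).pow_right j).smul_right _
  have hET : E * T = (T + B) * E := by
    have h1 : E * T = T * E + ∑ j ∈ Finset.range n, c j • (D ^ j * B ^ (j + 1)) := by
      simp only [E, Finset.sum_mul, Finset.mul_sum, smul_mul_assoc, mul_smul_comm]
      rw [Finset.sum_range_succ', Finset.sum_range_succ', add_right_comm,
        ← Finset.sum_add_distrib]
      congr 1
      · refine Finset.sum_congr rfl fun j hj => ?_
        rw [mul_assoc, ← (hTB.pow_right (j + 1)).eq, ← mul_assoc, hD, add_mul, smul_add,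
          smul_mul_assoc, smul_smul, hc j (Finset.mem_range.1 hj), mul_assoc]
      · simp
    have h2 : B * E = ∑ j ∈ Finset.range n, c j • (D ^ j * B ^ (j + 1)) := by
      simp only [E, Finset.mul_sum, mul_smul_comm]
      rw [Finset.sum_range_succ]
      have : ∀ j, B * (D ^ j * B ^ j) = D ^ j * B ^ (j + 1) := by
        intro j
        rw [← mul_assoc, ← (hDB.pow_left j).eq, mul_assoc, ← pow_succ']
      simp only [this]
      rw [← hn, hB]
      simp
    rw [h1, add_mul, h2]
  exact ⟨hu.unit, hET⟩

/-- class of `t` -/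
noncomputable def tt (k : Type*) [Field k] (p : ℕ) : TruncPoly k p :=
  Ideal.Quotient.mk _ X

lemma aux_deriv_R (k : Type*) [Field k] (p : ℕ) [Fact p.Prime] [CharP k p] :
    ∃ d : TruncPoly k p →ₗ[k] TruncPoly k p, ∀ x, d (tt k p * x) = tt k p * d x + x := by
  let I : Ideal k[X] := Ideal.span {(X : k[X]) ^ p}
  let π : k[X] →ₗ[k] TruncPoly k p := (Ideal.Quotient.mkₐ k I).toLinearMap
  have hπ : Function.Surjective π := Ideal.Quotient.mk_surjective
  have hk : LinearMap.ker π ≤ LinearMap.ker (π ∘ₗ Polynomial.derivative) := by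
    intro f hf
    have hf' : f ∈ I := Ideal.Quotient.eq_zero_iff_mem.1 hf
    obtain ⟨g, rfl⟩ := Ideal.mem_span_singleton.1 hf'
    refine Ideal.Quotient.eq_zero_iff_mem.2 (Ideal.mem_span_singleton.2 ?_)
    simp [Polynomial.derivative_mul, Polynomial.derivative_X_pow]
  let d := ((LinearMap.ker π).liftQ _ hk) ∘ₗ (π.quotKerEquivOfSurjective hπ).symm.toLinearMap
  have hd : ∀ f, d (π f) = π (derivative f) := by
    intro f
    have : (π.quotKerEquivOfSurjective hπ).symm (π f) = Submodule.Quotient.mk f := by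
      rw [LinearEquiv.symm_apply_eq]; rfl
    simp only [d, LinearMap.comp_apply, LinearEquiv.coe_coe, this]
    rfl
  refine ⟨d, fun x => ?_⟩
  obtain ⟨f, rfl⟩ := hπ x
  have h : ∀ f, tt k p * π f = π (X * f) := fun f => ((Ideal.Quotient.mk I).map_mul X f).symm
  rw [h, hd, hd, h, ← map_add]
  congr 1
  simp [Polynomial.derivative_mul, add_comm]

lemma aux_deriv (k : Type*) [Field k] (p : ℕ) [Fact p.Prime] [CharP k p]
    (M : Type*) [AddCommGroup M] [Module k M] [Module (TruncPoly k p) M]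
    [IsScalarTower k (TruncPoly k p) M] [Module.Free (TruncPoly k p) M] :
    ∃ d : M →ₗ[k] M, ∀ x, d (tt k p • x) = tt k p • d x + x := by
  obtain ⟨d, hd⟩ := aux_deriv_R k p
  let e := (Module.Free.chooseBasis (TruncPoly k p) M).repr
  let e' := e.restrictScalars k
  refine ⟨e'.symm.toLinearMap ∘ₗ Finsupp.mapRange.linearMap d ∘ₗ e'.toLinearMap, fun x => ?_⟩
  apply e.injective
  have h : ∀ y, e (e'.symm y) = y := fun y => e.apply_symm_apply y
  have h' : ∀ y, e' y = e y := fun y => rfl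
  ext i : 1
  simp [h, h', hd]

lemma aux_equiv (k : Type*) [Field k] (p : ℕ) [Fact p.Prime] [CharP k p]
    (M : Type*) [AddCommGroup M] [Module k M] [Module (TruncPoly k p) M]
    [IsScalarTower k (TruncPoly k p) M] [Module.Free (TruncPoly k p) M]
    (N : Type*) [AddCommGroup N] [Module k N] (b : Module.End k N) (hb : b ^ p = 0) :
    ∃ E : (M ⊗[k] N) ≃ₗ[k] (M ⊗[k] N), ∀ x,
      E (tt k p • x) = tt k p • E x + TensorProduct.map LinearMap.id b (E x) := by
  obtain ⟨d, hd⟩ := aux_deriv k p M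
  let t : Module.End k M := Algebra.lsmul k k M (tt k p)
  have hdt : d * t = t * d + 1 := by ext x; exact hd x
  obtain ⟨E, hE⟩ := aux_unit (k := k) (p := p) (S := Module.End k (M ⊗[k] N))
    (TensorProduct.map d 1) (TensorProduct.map t 1) (TensorProduct.map 1 b)
    (by rw [← TensorProduct.map_mul, ← TensorProduct.map_mul, hdt, TensorProduct.map_add_left,
          mul_one, TensorProduct.map_one])
    (by rw [commute_iff_eq, ← TensorProduct.map_mul, ← TensorProduct.map_mul]; simp)
    (by rw [commute_iff_eq, ← TensorProduct.map_mul, ← TensorProduct.map_mul]; simp)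
    (by rw [TensorProduct.map_pow, hb, TensorProduct.map_zero_right])
  have ht : ∀ x : M ⊗[k] N, tt k p • x = TensorProduct.map t 1 x := fun x => rfl
  refine ⟨LinearMap.GeneralLinearGroup.generalLinearEquiv k _ E, fun x => ?_⟩
  rw [ht, ht]
  exact LinearMap.congr_fun hE x

lemma aux_free {k : Type*} [Field k] {p : ℕ}
    {M : Type*} [AddCommGroup M] [Module k M] [Module (TruncPoly k p) M]
    [IsScalarTower k (TruncPoly k p) M] [Module.Free (TruncPoly k p) M]
    {C : Type*} [Ring C] [Algebra k C] (c : C) (hc : c ^ p = 0)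
    (e : M ≃ₗ[k] C) (he : ∀ x, e (tt k p • x) = c * e x) :
    letI := truncSMul (k := k) (p := p) c hc
    Module.Free (TruncPoly k p) C := by
  letI := truncSMul (k := k) (p := p) c hc
  have key : ∀ (r : TruncPoly k p) (x : M), e (r • x) = truncHom c hc r * e x := by
    intro r x
    obtain ⟨f, rfl⟩ := Ideal.Quotient.mk_surjective r
    have h0 : ∀ f : k[X], truncHom (k := k) c hc (Ideal.Quotient.mk _ f) = aeval c f :=
      fun f => rfl
    rw [h0]
    induction f using Polynomial.induction_on' with
    | add f g hf hg => rw [map_add, add_smul, map_add, hf, hg, map_add, add_mul]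
    | monomial n r =>
      have h1 : ∀ n : ℕ, e (tt k p ^ n • x) = c ^ n * e x := by
        intro n
        induction n with
        | zero => simp
        | succ n ih => rw [pow_succ', mul_smul, he, ih, pow_succ', mul_assoc]
      have h2 : (Ideal.Quotient.mk (Ideal.span {(X : k[X]) ^ p}) (monomial n r))
          = r • (tt k p ^ n) := by
        rw [← mul_one r, ← smul_eq_mul, ← Polynomial.smul_monomial, Polynomial.monomial_one_right_eq_X_pow]
        simp only [smul_eq_mul, mul_one]
        rfl
      rw [h2, smul_assoc, map_smul, h1, aeval_monomial, ← Algebra.smul_def, smul_mul_assoc]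
  let e' : M ≃ₗ[TruncPoly k p] C := { e.toAddEquiv with map_smul' := fun r x => key r x }
  exact Module.Free.of_equiv e'

lemma aux_tower {k : Type*} [Field k] {p : ℕ} {C : Type*} [Ring C] [Algebra k C]
    (c : C) (hc : c ^ p = 0) :
    letI := truncSMul (k := k) (p := p) c hc
    IsScalarTower k (TruncPoly k p) C := by
  letI := truncSMul (k := k) (p := p) c hc
  refine ⟨fun r x y => ?_⟩
  change truncHom c hc (r • x) * y = r • (truncHom c hc x * y)
  rw [map_smul, smul_mul_assoc]

lemma aux_tt {k : Type*} [Field k] {p : ℕ} {C : Type*} [Ring C] [Algebra k C]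
    (c : C) (hc : c ^ p = 0) (x : C) :
    letI := truncSMul (k := k) (p := p) c hc
    tt k p • x = c * x := by
  change aeval c (X : k[X]) * x = c * x
  rw [aeval_X]

lemma aux_main (k : Type*) [Field k] (p : ℕ) [Fact p.Prime] [CharP k p]
    (A B : Type*) [Ring A] [Ring B] [Algebra k A] [Algebra k B]
    (a : A) (b : B) (ha : a ^ p = 0) (hb : b ^ p = 0)
    (hA :
          letI := truncSMul (k := k) (p := p) a ha
          Module.Free (TruncPoly k p) A)
    {C : Type*} [Ring C] [Algebra k C] (f : A ⊗[k] B ≃ₐ[k] C) (c : C) (hc : c ^ p = 0)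
    (hf : f (a ⊗ₜ[k] (1 : B) + (1 : A) ⊗ₜ[k] b) = c) :
    letI := truncSMul (k := k) (p := p) c hc
    Module.Free (TruncPoly k p) C := by
  letI := truncSMul (k := k) (p := p) a ha
  haveI := aux_tower (k := k) a ha
  haveI : Module.Free (TruncPoly k p) A := hA
  obtain ⟨E, hE⟩ := aux_equiv k p A B (LinearMap.mulLeft k b)
    (by rw [LinearMap.pow_mulLeft, hb, LinearMap.mulLeft_zero_eq_zero])
  refine aux_free (M := A ⊗[k] B) c hc (E.trans f.toLinearEquiv) fun x => ?_
  have h1 : ∀ y : A ⊗[k] B, tt k p • y + TensorProduct.map LinearMap.id (LinearMap.mulLeft k b) y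
      = (a ⊗ₜ[k] (1 : B) + (1 : A) ⊗ₜ[k] b) * y := by
    intro y
    induction y using TensorProduct.induction_on with
    | zero => simp
    | tmul u v =>
      rw [TensorProduct.smul_tmul', aux_tt]
      simp [add_mul]
    | add u v hu hv => rw [smul_add, map_add, mul_add, ← hu, ← hv]; abel
  simp only [LinearEquiv.trans_apply, hE, h1, AlgEquiv.toLinearEquiv_apply, map_mul, hf]


theorem statement5 (k : Type*) [Field k] (p : ℕ) [Fact p.Prime] [CharP k p]
    (A B : Type*) [Ring A] [Ring B] [Algebra k A] [Algebra k B]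
    (a : A) (b : B) (ha : a ^ p = 0) (hb : b ^ p = 0)
    (hA : (letI := truncSMul (k := k) (p := p) a ha
           Module.Free (TruncPoly k p) A) ∨ a = 0)
    (hB : (letI := truncSMul (k := k) (p := p) b hb
           Module.Free (TruncPoly k p) B) ∨ b = 0)
    (hAB : (letI := truncSMul (k := k) (p := p) a ha
            Module.Free (TruncPoly k p) A) ∨
           (letI := truncSMul (k := k) (p := p) b hb
            Module.Free (TruncPoly k p) B)) :
    letI := truncSMul (k := k) (p := p) (a ⊗ₜ[k] (1 : B) + (1 : A) ⊗ₜ[k] b)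
      (tmul_add_tmul_pow_eq_zero (k := k) ha hb)
    Module.Free (TruncPoly k p) (A ⊗[k] B) := by
  rcases hAB with h | h
  · exact aux_main k p A B a b ha hb h AlgEquiv.refl _ _ rfl
  · exact aux_main k p B A b a hb ha h (Algebra.TensorProduct.comm k B A) _ _ (by
      simp [add_comm])
end

section
/- Let k be a field of characteristic p > 0, let n ≥ 1, and let A = k[x_1, …, x_n]/(x_1^p, …, x_n^p). For any scalars λ_1, …, λ_n ∈ k, not all zero, the element a = λ_1 x_1 + ⋯ + λ_n x_n satisfies a^p = 0, and A is a free module of rank p^{n−1} over k[t]/(t^p) with t acting by multiplication by a. -/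
open Polynomial TensorProduct

/-- The truncated polynomial algebra `k[x₁, …, xₙ]/(x₁^p, …, xₙ^p)`. -/
abbrev TruncMvPoly (k : Type*) [Field k] (p n : ℕ) :=
  MvPolynomial (Fin n) k ⧸
    Ideal.span (Set.range fun i : Fin n => (MvPolynomial.X i : MvPolynomial (Fin n) k) ^ p)

/-- The image `xᵢ` of the variable `Xᵢ` in `k[x₁, …, xₙ]/(x₁^p, …, xₙ^p)`. -/
noncomputable def truncMvGen (k : Type*) [Field k] (p n : ℕ) (i : Fin n) : TruncMvPoly k p n :=
  Ideal.Quotient.mk _ (MvPolynomial.X i)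

/-- A `k`-linear combination of the generators of `k[x₁, …, xₙ]/(x₁^p, …, xₙ^p)` has
vanishing `p`-th power. -/
lemma truncMvGen_linear_pow_eq_zero (k : Type*) [Field k] (p : ℕ) [Fact p.Prime] [CharP k p]
    (n : ℕ) (lam : Fin n → k) :
    (∑ i, lam i • truncMvGen k p n i) ^ p = 0 := by
  refine sum_pow_eq_zero_of_commute (k := k) Finset.univ _ ?_ ?_
  · intro i _ j _
    exact mul_comm _ _
  · intro i _
    have h : truncMvGen k p n i ^ p = 0 := by
      rw [truncMvGen, ← map_pow, Ideal.Quotient.eq_zero_iff_mem]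
      exact Ideal.subset_span ⟨i, rfl⟩
    rw [_root_.smul_pow, h, smul_zero]

lemma aux_indep (k : Type*) [Field k] (p n : ℕ) :
    LinearIndependent k (fun e : Fin n → Fin p =>
      (Ideal.Quotient.mk _ (MvPolynomial.monomial
        (Finsupp.equivFunOnFinite.symm fun i => (e i : ℕ)) (1 : k)) : TruncMvPoly k p n)) := by
  classical
  rw [Fintype.linearIndependent_iff]
  intro g hg e
  have h1 : (∑ e : Fin n → Fin p, MvPolynomial.monomial
        (Finsupp.equivFunOnFinite.symm fun i => (e i : ℕ)) (g e)) ∈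
      Ideal.span (Set.range fun i : Fin n => (MvPolynomial.X i : MvPolynomial (Fin n) k) ^ p) := by
    rw [← Ideal.Quotient.eq_zero_iff_mem, ← hg, map_sum]
    refine Finset.sum_congr rfl fun e _ => ?_
    rw [← mul_one (g e), ← smul_eq_mul, ← MvPolynomial.smul_monomial]
    simp only [smul_eq_mul, mul_one]
    rfl
  have h2 : (Set.range fun i : Fin n => (MvPolynomial.X i : MvPolynomial (Fin n) k) ^ p) =
      (fun s => MvPolynomial.monomial s (1 : k)) '' (Set.range fun i => Finsupp.single i p) := by
    rw [← Set.range_comp]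
    congr 1
    funext i
    simp [MvPolynomial.X_pow_eq_monomial]
  rw [h2, MvPolynomial.mem_ideal_span_monomial_image] at h1
  by_contra hne
  obtain ⟨s, ⟨i, rfl⟩, hle⟩ := h1 (Finsupp.equivFunOnFinite.symm fun i => (e i : ℕ)) (by
    rw [MvPolynomial.mem_support_iff, MvPolynomial.coeff_sum, Finset.sum_eq_single e]
    · simpa using hne
    · intro b _ hb
      rw [MvPolynomial.coeff_monomial, if_neg]
      intro h
      apply hb
      funext j
      have := DFunLike.congr_fun h j
      exact Fin.ext (by simpa using this)
    · simp)
  have := hle i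
  simp at this
  have := (e i).2
  omega

lemma aux_span (k : Type*) [Field k] (p : ℕ) [Fact p.Prime] (n : ℕ) (lam : Fin n → k)
    (i₀ : Fin n) (hi : lam i₀ ≠ 0)
    (S : Submodule k (TruncMvPoly k p n))
    (hS : ∀ x ∈ S, (∑ i, lam i • truncMvGen k p n i) * x ∈ S)
    (hm : ∀ e : {j // j ≠ i₀} → Fin p, ∏ j, truncMvGen k p n j.1 ^ (e j : ℕ) ∈ S)
    (hS' : ∀ j, j ≠ i₀ → ∀ x ∈ S, truncMvGen k p n j * x ∈ S) : S = ⊤ := by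
  classical
  have hi0 : ∀ x ∈ S, truncMvGen k p n i₀ * x ∈ S := by
    intro x hx
    have h := hS x hx
    rw [← Finset.add_sum_erase _ _ (Finset.mem_univ i₀), add_mul, Finset.sum_mul] at h
    have h2 : ∑ i ∈ Finset.univ.erase i₀, lam i • truncMvGen k p n i * x ∈ S := by
      refine Submodule.sum_mem _ fun i hi => ?_
      rw [smul_mul_assoc]
      exact S.smul_mem _ (hS' i (Finset.ne_of_mem_erase hi) x hx)
    have h3 := (Submodule.add_mem_iff_left S h2).1 h
    rw [smul_mul_assoc] at h3
    exact (Submodule.smul_mem_iff S hi).1 h3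
  have h1 : (1 : TruncMvPoly k p n) ∈ S := by
    have := hm (fun _ => ⟨0, (Fact.out : p.Prime).pos⟩)
    simpa using this
  rw [eq_top_iff]
  rintro x -
  obtain ⟨q, rfl⟩ := Ideal.Quotient.mk_surjective x
  induction q using MvPolynomial.induction_on with
  | C c =>
    have := S.smul_mem c h1
    have h2 : c • (1 : TruncMvPoly k p n) = Ideal.Quotient.mk _ (MvPolynomial.C c) := by
      have h3 : (MvPolynomial.C c : MvPolynomial (Fin n) k) = c • 1 := by
        rw [MvPolynomial.smul_eq_C_mul, mul_one]
      rw [h3]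
      rfl
    rw [← h2]
    exact this
  | add f g hf hg => rw [map_add]; exact S.add_mem hf hg
  | mul_X f i hf =>
    rw [map_mul, mul_comm]
    by_cases h : i = i₀
    · subst h; exact hi0 _ hf
    · exact hS' i h _ hf

/-- For `a = λ₁x₁ + ⋯ + λₙxₙ` with the `λᵢ` not all zero, `a^p = 0` and
`k[x₁, …, xₙ]/(x₁^p, …, xₙ^p)` is free of rank `p^(n-1)` over `k[t]/(t^p)`, `t ↦ a`. -/
theorem statement6 (k : Type*) [Field k] (p : ℕ) [Fact p.Prime] [CharP k p]
    (n : ℕ) (hn : 1 ≤ n) (lam : Fin n → k) (hlam : ∃ i, lam i ≠ 0) :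
    ((∑ i, lam i • truncMvGen k p n i) ^ p = 0) ∧
    (letI := truncSMul (k := k) (p := p) (∑ i, lam i • truncMvGen k p n i)
        (truncMvGen_linear_pow_eq_zero k p n lam)
     Module.Free (TruncPoly k p) (TruncMvPoly k p n) ∧
       Module.finrank (TruncPoly k p) (TruncMvPoly k p n) = p ^ (n - 1)) := by
  classical
  refine ⟨truncMvGen_linear_pow_eq_zero k p n lam, ?_⟩
  obtain ⟨i₀, hi⟩ := hlam
  have hp : p.Prime := Fact.out
  have ha := truncMvGen_linear_pow_eq_zero k p n lam
  letI := truncSMul (k := k) (p := p) (∑ i, lam i • truncMvGen k p n i)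
        (truncMvGen_linear_pow_eq_zero k p n lam)
  have hdef : ∀ (r : TruncPoly k p) (x : TruncMvPoly k p n),
    r • x = truncHom (∑ i, lam i • truncMvGen k p n i) ha r * x := fun _ _ => rfl
  haveI : IsScalarTower k (TruncPoly k p) (TruncMvPoly k p n) := ⟨fun c r x => by
    rw [hdef, hdef, map_smul, smul_mul_assoc]⟩
  let m : ({j // j ≠ i₀} → Fin p) → TruncMvPoly k p n :=
    fun e => ∏ j, truncMvGen k p n j.1 ^ (e j : ℕ)
  have hX : ∀ i, truncMvGen k p n i ^ p = 0 := fun i => by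
    rw [truncMvGen, ← map_pow, Ideal.Quotient.eq_zero_iff_mem]
    exact Ideal.subset_span ⟨i, rfl⟩
  have htop : Submodule.span (TruncPoly k p) (Set.range m) = ⊤ := by
    have hN : ∀ e : {j // j ≠ i₀} → ℕ, ∏ j, truncMvGen k p n j.1 ^ (e j) ∈
        Submodule.span (TruncPoly k p) (Set.range m) := by
      intro e
      by_cases h : ∀ j, e j < p
      · exact Submodule.subset_span ⟨fun j => ⟨e j, h j⟩, rfl⟩
      · push Not at h
        obtain ⟨j, hj⟩ := h
        have h0 : truncMvGen k p n j.1 ^ (e j) = 0 := pow_eq_zero_of_le hj (hX _)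
        rw [Finset.prod_eq_zero (Finset.mem_univ j) h0]
        exact Submodule.zero_mem _
    rw [← Submodule.restrictScalars_eq_top_iff (S := k)]
    refine aux_span k p n lam i₀ hi _ ?_ ?_ ?_
    · intro x hx
      have := Submodule.smul_mem _ (Ideal.Quotient.mk _ (Polynomial.X : Polynomial k) : TruncPoly k p) hx
      rw [hdef] at this
      have h2 : truncHom (∑ i, lam i • truncMvGen k p n i) ha
        (Ideal.Quotient.mk _ (Polynomial.X : Polynomial k) : TruncPoly k p) =
          (∑ i, lam i • truncMvGen k p n i) := by
        exact Polynomial.aeval_X _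
      rw [h2] at this
      exact this
    · intro e
      exact Submodule.subset_span ⟨e, rfl⟩
    · intro j hj x hx
      change x ∈ Submodule.span (TruncPoly k p) (Set.range m) at hx
      change _ ∈ Submodule.span (TruncPoly k p) (Set.range m)
      induction hx using Submodule.span_induction with
      | zero => rw [mul_zero]; exact Submodule.zero_mem _
      | add x y _ _ hx hy => rw [mul_add]; exact Submodule.add_mem _ hx hy
      | smul r x _ hx =>
        have := Submodule.smul_mem _ r hx
        rw [hdef] at this ⊢
        rwa [mul_left_comm]
      | mem x hx =>
        obtain ⟨e, rfl⟩ := hx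
        have := hN (fun j' => (if j' = ⟨j, hj⟩ then 1 else 0) + (e j' : ℕ))
        simp only [pow_add, Finset.prod_mul_distrib] at this
        simpa [pow_ite] using this
  let φ := Fintype.linearCombination (TruncPoly k p) m
  have hsurj : Function.Surjective φ := by
    rw [← LinearMap.range_eq_top, Fintype.range_linearCombination, htop]
  have hXp : (Polynomial.X ^ p : Polynomial k) ≠ 0 := pow_ne_zero _ Polynomial.X_ne_zero
  have hdR : Module.finrank k (TruncPoly k p) = p := by
    rw [finrank_quotient_span_eq_natDegree, Polynomial.natDegree_X_pow]
  haveI : Module.Finite k (TruncPoly k p) := Module.finite_of_finrank_pos (by rw [hdR]; exact hp.pos)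
  haveI : Nontrivial (TruncPoly k p) := Module.nontrivial_of_finrank_pos (R := k) (by rw [hdR]; exact hp.pos)
  have hcard : Fintype.card ({j // j ≠ i₀} → Fin p) = p ^ (n - 1) := by
    simp
  let ψ := φ.restrictScalars k
  have hsurj' : Function.Surjective ψ := hsurj
  haveI : Module.Finite k (TruncMvPoly k p n) := Module.Finite.of_surjective ψ hsurj'
  have hd1 : Module.finrank k (({j // j ≠ i₀} → Fin p) → TruncPoly k p) = p ^ n := by
    rw [Module.finrank_pi_fintype]
    simp only [hdR, Finset.sum_const, Finset.card_univ, hcard, smul_eq_mul]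
    rw [← pow_succ, Nat.sub_add_cancel hn]
  have hd2 : p ^ n ≤ Module.finrank k (TruncMvPoly k p n) := by
    have := (aux_indep k p n).fintype_card_le_finrank
    simpa using this
  have hd3 : Module.finrank k (TruncMvPoly k p n) =
      Module.finrank k (({j // j ≠ i₀} → Fin p) → TruncPoly k p) :=
    le_antisymm (LinearMap.finrank_le_finrank_of_surjective hsurj') (hd1 ▸ hd2)
  have hinj : Function.Injective ψ :=
    (LinearMap.injective_iff_surjective_of_finrank_eq_finrank hd3.symm).2 hsurj'
  let b : Module.Basis ({j // j ≠ i₀} → Fin p) (TruncPoly k p) (TruncMvPoly k p n) :=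
    Module.Basis.ofEquivFun (LinearEquiv.ofBijective φ ⟨hinj, hsurj⟩).symm
  exact ⟨Module.Free.of_basis b, by rw [Module.finrank_eq_card_basis b, hcard]⟩
end
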